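/- The performance of algorithm Revoke-Unit cannot be better than OPT − η: there exist an instance of interval selection with unit weights, a prediction assignment, and a maximum-cardinality feasible set OPT such that the solution produced by Revoke-Unit satisfies ALG = OPT − η, where η > 0 is the total prediction error relative to OPT. -/

import Mathlib

attribute [local instance] Classical.propDecidable

noncomputable section

/-- An interval `I = (s, f)` with `s < f`, occupying `[s, f)`. -/
structure Ivl where
  s : ℝ
  f : ℝ
  lt : s < f

namespace Ivl

/-- The set of points occupied by an interval: the half-open set `[s, f)`. -/
def occ (I : Ivl) : Set ℝ := Set.Ico I.s I.f

/-- The length of an interval, `f - s` (also its proportional weight). -/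
def len (I : Ivl) : ℝ := I.f - I.s

end Ivl

/-- Two intervals conflict if their occupied sets intersect. -/
def Conflict (I J : Ivl) : Prop := (I.occ ∩ J.occ).Nonempty

/-- A set of intervals is feasible if its elements are pairwise disjoint. -/
def Feasible (S : Finset Ivl) : Prop :=
  ∀ I ∈ S, ∀ J ∈ S, I ≠ J → ¬ Conflict I J

/-- `opt` is a maximum-cardinality feasible subset of the instance's intervals. -/
def IsMaxCardOpt (inst : List Ivl) (opt : Finset Ivl) : Prop :=
  (∀ I ∈ opt, I ∈ inst) ∧ Feasible opt ∧
    ∀ T : Finset Ivl, (∀ I ∈ T, I ∈ inst) → Feasible T → T.card ≤ opt.card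

/-- The prediction error introduced by interval `I`, relative to `opt`,
with weight function `w`. -/
def err (w : Ivl → ℝ) (opt : Finset Ivl) (Prd : Ivl → Bool) (I : Ivl) : ℝ :=
  if (Prd I = true ↔ I ∈ opt) then 0
  else if I ∈ opt then w I
  else (∑ J ∈ opt.filter (fun J => Conflict J I), w J) - w I

/-- The total prediction error of the instance relative to `opt`. -/
def totalErr (w : Ivl → ℝ) (opt : Finset Ivl) (Prd : Ivl → Bool)
    (inst : List Ivl) : ℝ :=
  (inst.map (err w opt Prd)).sum

/-- A conflict is partial if neither occupied set contains the other. -/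
def PartialConflict (I J : Ivl) : Prop :=
  Conflict I J ∧ ¬ I.occ ⊆ J.occ ∧ ¬ J.occ ⊆ I.occ

/-- One step of algorithm `Revoke-Unit` on state `(S, M)` (solution, marked)
upon the arrival of `I`. -/
def revokeUnitStep (Prd : Ivl → Bool) (st : Finset Ivl × Finset Ivl)
    (I : Ivl) : Finset Ivl × Finset Ivl :=
  let S := st.1
  let M := st.2
  let Is := S.filter (fun J => Conflict I J)
  if Is = ∅ then
    (insert I S, M)
  else if ∃ I', Is = {I'} ∧ I.occ ⊂ I'.occ then
    (insert I (S \ Is), if Is ∩ M = ∅ then M else insert I M)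
  else if (∀ J ∈ Is, PartialConflict I J) ∧ Prd I = true ∧ Is ∩ M = ∅ then
    (insert I (S \ Is), insert I M)
  else
    st

/-- The solution produced by algorithm `Revoke-Unit` on the instance `inst`
with predictions `Prd`. -/
def revokeUnit (Prd : Ivl → Bool) (inst : List Ivl) : Finset Ivl :=
  (inst.foldl (revokeUnitStep Prd) (∅, ∅)).1

/-- The first interval of the tight instance, `[0, 2)`. -/
def ivB : Ivl := ⟨0, 2, by norm_num⟩

/-- The wrongly predicted interval of the tight instance, `[1, 3)`. -/
def ivA : Ivl := ⟨1, 3, by norm_num⟩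

/-- The last interval of the tight instance, `[2, 4)`. -/
def ivC : Ivl := ⟨2, 4, by norm_num⟩

theorem ivBA_ne : ivB ≠ ivA := by
  intro h
  have := congrArg Ivl.s h
  norm_num [ivB, ivA] at this

theorem ivBC_ne : ivB ≠ ivC := by
  intro h
  have := congrArg Ivl.s h
  norm_num [ivB, ivC] at this

theorem ivAC_ne : ivA ≠ ivC := by
  intro h
  have := congrArg Ivl.s h
  norm_num [ivA, ivC] at this

theorem conflict_symm {I J : Ivl} (h : Conflict I J) : Conflict J I := by
  unfold Conflict at *
  rwa [Set.inter_comm]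

theorem conflict_BA : Conflict ivB ivA :=
  ⟨1, by norm_num [Ivl.occ, ivB], by norm_num [Ivl.occ, ivA]⟩

theorem conflict_CA : Conflict ivC ivA :=
  ⟨2, by norm_num [Ivl.occ, ivC], by norm_num [Ivl.occ, ivA]⟩

theorem not_conflict_BC : ¬ Conflict ivB ivC := by
  rintro ⟨x, hx, hy⟩
  simp only [Ivl.occ, ivB, ivC, Set.mem_Ico] at hx hy
  linarith [hx.2, hy.1]

theorem not_sub_AB : ¬ ivA.occ ⊆ ivB.occ := by
  intro h
  have := @h 2 (by norm_num [Ivl.occ, ivA])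
  norm_num [Ivl.occ, ivB] at this

theorem not_sub_BA : ¬ ivB.occ ⊆ ivA.occ := by
  intro h
  have := @h 0 (by norm_num [Ivl.occ, ivB])
  norm_num [Ivl.occ, ivA] at this

theorem not_sub_CA : ¬ ivC.occ ⊆ ivA.occ := by
  intro h
  have := @h 3 (by norm_num [Ivl.occ, ivC])
  norm_num [Ivl.occ, ivA] at this

theorem step_B : revokeUnitStep (fun _ => true) (∅, ∅) ivB = ({ivB}, ∅) := by
  simp [revokeUnitStep]

theorem step_A : revokeUnitStep (fun _ => true) ({ivB}, ∅) ivA = ({ivA}, {ivA}) := by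
  have h : Finset.filter (fun J => Conflict ivA J) {ivB} = {ivB} := by
    rw [Finset.filter_singleton, if_pos (conflict_symm conflict_BA)]
  have h2 : ¬ ∃ I', ({ivB} : Finset Ivl) = {I'} ∧ ivA.occ ⊂ I'.occ := by
    rintro ⟨I', he, hs⟩
    rw [Finset.singleton_inj] at he
    subst he
    exact not_sub_AB hs.1
  have h3 : PartialConflict ivA ivB := ⟨conflict_symm conflict_BA, not_sub_AB, not_sub_BA⟩
  simp only [revokeUnitStep, h]
  rw [if_neg (Finset.singleton_ne_empty _), if_neg h2, if_pos (by simpa using h3)]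
  simp

theorem step_C : revokeUnitStep (fun _ => true) ({ivA}, {ivA}) ivC = ({ivA}, {ivA}) := by
  have h : Finset.filter (fun J => Conflict ivC J) {ivA} = {ivA} := by
    rw [Finset.filter_singleton, if_pos conflict_CA]
  have h2 : ¬ ∃ I', ({ivA} : Finset Ivl) = {I'} ∧ ivC.occ ⊂ I'.occ := by
    rintro ⟨I', he, hs⟩
    rw [Finset.singleton_inj] at he
    subst he
    exact not_sub_CA hs.1
  simp only [revokeUnitStep, h]
  rw [if_neg (Finset.singleton_ne_empty _), if_neg h2, if_neg (by simp)]

theorem revoke_eq : revokeUnit (fun _ => true) [ivB, ivA, ivC] = {ivA} := by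
  simp only [revokeUnit, List.foldl, step_B, step_A, step_C]

theorem totalErr_eq :
    totalErr (fun _ => 1) {ivB, ivC} (fun _ => true) [ivB, ivA, ivC] = 1 := by
  have hA : ivA ∉ ({ivB, ivC} : Finset Ivl) := by
    simp [ivBA_ne.symm, ivAC_ne]
  have hf : Finset.filter (fun J => Conflict J ivA) {ivB, ivC} = {ivB, ivC} := by
    apply Finset.filter_true_of_mem
    intro J hJ
    simp only [Finset.mem_insert, Finset.mem_singleton] at hJ
    rcases hJ with rfl | rfl
    · exact conflict_BA
    · exact conflict_CA
  simp only [totalErr, List.map, List.sum_cons, List.sum_nil, err, hf]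
  simp [hA, Finset.card_pair ivBC_ne]
  norm_num

theorem opt_BC : IsMaxCardOpt [ivB, ivA, ivC] {ivB, ivC} := by
  refine ⟨?_, ?_, ?_⟩
  · intro I hI
    simp only [Finset.mem_insert, Finset.mem_singleton] at hI
    rcases hI with rfl | rfl <;> simp
  · intro I hI J hJ hne
    simp only [Finset.mem_insert, Finset.mem_singleton] at hI hJ
    rcases hI with rfl | rfl <;> rcases hJ with rfl | rfl
    · exact absurd rfl hne
    · exact not_conflict_BC
    · exact fun h => not_conflict_BC (conflict_symm h)
    · exact absurd rfl hne
  · intro T hT hF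
    rw [Finset.card_pair ivBC_ne]
    by_cases hA : ivA ∈ T
    · have : T ⊆ {ivA} := by
        intro I hI
        have hm := hT I hI
        simp only [List.mem_cons, List.not_mem_nil, or_false] at hm
        rcases hm with rfl | rfl | rfl
        · exact absurd conflict_BA (hF _ hI _ hA ivBA_ne)
        · simp
        · exact absurd conflict_CA (hF _ hI _ hA ivAC_ne.symm)
      have := Finset.card_le_card this
      simp at this
      omega
    · have : T ⊆ {ivB, ivC} := by
        intro I hI
        have hm := hT I hI
        simp only [List.mem_cons, List.not_mem_nil, or_false] at hm
        rcases hm with rfl | rfl | rfl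
        · simp
        · exact absurd hI hA
        · simp
      have := Finset.card_le_card this
      rwa [Finset.card_pair ivBC_ne] at this

theorem revokeUnit_not_better_than_opt_sub_err :
    ∃ (inst : List Ivl) (Prd : Ivl → Bool) (opt : Finset Ivl),
      inst.Nodup ∧ IsMaxCardOpt inst opt ∧
      0 < totalErr (fun _ => 1) opt Prd inst ∧
      ((revokeUnit Prd inst).card : ℝ) =
        (opt.card : ℝ) - totalErr (fun _ => 1) opt Prd inst := by
  refine ⟨[ivB, ivA, ivC], fun _ => true, {ivB, ivC}, ?_, opt_BC, ?_, ?_⟩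
  · simp [ivBA_ne, ivBC_ne, ivAC_ne]
  · rw [totalErr_eq]
    norm_num
  · rw [totalErr_eq, revoke_eq, Finset.card_pair ivBC_ne]
    norm_num
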